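/- Let G be a finite r-regular graph with girth g, equipped with a random label assignment with probabilities (p₀,p), and let N be a nonnegative integer with 2(N+2) < g−2. Then for any vertex u and any 0 ≤ k ≤ r, the conditional probability that exactly k of the r neighbours of u lie in W_N, given u ∈ W_N, equals C(r,k)·(q_N/w_N)^k·(1 − q_N/w_N)^{r−k}; that is, conditional on u being white at time N, the number of white neighbours of u at time N has the binomial distribution Bin(r, q_N/w_N). -/

import Mathlib

open MeasureTheory ProbabilityTheory Filter Set

namespace InducedForest

variable {V : Type*}

/-- Label `i` is *relevant* for vertex `v` (w.r.t. the label assignment `S`):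
either `i = 0` and `0 ∈ S v`, or `i ∈ S v`, no `j < i` is relevant for `v`, and
there is a unique neighbour of `v` having a relevant label strictly smaller than `i`. -/
def Relevant (G : SimpleGraph V) (S : V → Set ℕ) (i : ℕ) : V → Prop :=
  Nat.strongRecOn i (fun i ih v =>
    (i = 0 ∧ 0 ∈ S v) ∨
    (i ∈ S v ∧ (∀ j, (h : j < i) → ¬ ih j h v) ∧
      (∃! u, G.Adj v u ∧ ∃ j, ∃ h : j < i, ih j h u)))

/-- `v` has some relevant label `≤ l`, i.e. `v ∈ R_{≤ l}`. -/
def RelevantLe (G : SimpleGraph V) (S : V → Set ℕ) (l : ℕ) (v : V) : Prop :=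
  ∃ i ≤ l, Relevant G S i v

inductive Colour | white | blue | orange | purple
deriving DecidableEq

open Classical in
/-- The colour of `u` at time `l`. -/
noncomputable def colourAt (G : SimpleGraph V) (S : V → Set ℕ) (l : ℕ) (u : V) : Colour :=
  if RelevantLe G S l u then Colour.purple
  else if ∀ v, G.Adj u v → ¬ RelevantLe G S l v then Colour.white
  else if ∃! v, G.Adj u v ∧ RelevantLe G S l v then Colour.blue
  else Colour.orange

/-- The set `W_l` of white vertices at time `l`. -/
def White (G : SimpleGraph V) (S : V → Set ℕ) (l : ℕ) : Set V :=
  {u | ¬ RelevantLe G S l u ∧ ∀ v, G.Adj u v → ¬ RelevantLe G S l v}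

/-- The set `B_l` of blue vertices at time `l`. -/
def Blue (G : SimpleGraph V) (S : V → Set ℕ) (l : ℕ) : Set V :=
  {u | ¬ RelevantLe G S l u ∧ ∃! v, G.Adj u v ∧ RelevantLe G S l v}
/-- The label assignment determined by a sample point `ω`. -/
def labels (ω : V → ℕ → Bool) : V → Set ℕ := fun v => {i | ω v i = true}

/-- `μ` is the random label assignment with probabilities `(p₀, p)`: the events
`i ∈ S(v)` are mutually independent, and each has probability `p₀` if `i = 0`
and `p` if `i ≥ 1`. -/
def IsLabelMeasure (μ : Measure (V → ℕ → Bool)) (p₀ p : ℝ) : Prop :=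
  IsProbabilityMeasure μ ∧
  iIndepSet (fun q : V × ℕ => {ω : V → ℕ → Bool | ω q.1 q.2 = true}) μ ∧
  ∀ (v : V) (i : ℕ), μ {ω | ω v i = true} = ENNReal.ofReal (if i = 0 then p₀ else p)

/-- Event that `u` is white at time `l`. -/
def WEv (G : SimpleGraph V) (l : ℕ) (u : V) : Set (V → ℕ → Bool) :=
  {ω | u ∈ White G (labels ω) l}

/-- Event that `u` is blue at time `l`. -/
def BEv (G : SimpleGraph V) (l : ℕ) (u : V) : Set (V → ℕ → Bool) :=
  {ω | u ∈ Blue G (labels ω) l}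

/-- Event that `u` has relevant label `i`, i.e. `u ∈ R_i`. -/
def REv (G : SimpleGraph V) (i : ℕ) (u : V) : Set (V → ℕ → Bool) :=
  {ω | Relevant G (labels ω) i u}

/-- Event that `u` has a relevant label `≤ l`, i.e. `u ∈ R_{≤ l}`. -/
def RLeEv (G : SimpleGraph V) (l : ℕ) (u : V) : Set (V → ℕ → Bool) :=
  {ω | RelevantLe G (labels ω) l u}

/-- `G` is `r`-regular. -/
def IsRegular (G : SimpleGraph V) (r : ℕ) : Prop :=
  ∀ v : V, (G.neighborSet v).ncard = r

/-! ### Deterministic part -/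

theorem relevant_iff (G : SimpleGraph V) (S : V → Set ℕ) (i : ℕ) (v : V) :
    Relevant G S i v ↔ (i = 0 ∧ 0 ∈ S v) ∨
    (i ∈ S v ∧ (∀ j, j < i → ¬ Relevant G S j v) ∧
      (∃! u, G.Adj v u ∧ ∃ j, ∃ _ : j < i, Relevant G S j u)) := by
  unfold Relevant
  rw [Nat.strongRecOn_eq]

/-- The branch process: `v` becomes relevant at a label `≤ n` when only looking away from `u`. -/
def BR (G : SimpleGraph V) (ω : V → ℕ → Bool) : ℕ → V → V → Prop
  | 0, _, v => ω v 0 = true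
  | n + 1, u, v => BR G ω n u v ∨
      (ω v (n + 1) = true ∧ ∃! w, (G.Adj v w ∧ w ≠ u) ∧ BR G ω n v w)

theorem BR_mono {G : SimpleGraph V} {ω : V → ℕ → Bool} {m n : ℕ} (h : m ≤ n) {u v : V}
    (hb : BR G ω m u v) : BR G ω n u v := by
  induction h with
  | refl => exact hb
  | step _ ih => exact Or.inl ih

theorem relevantLe_zero (G : SimpleGraph V) (ω : V → ℕ → Bool) (v : V) :
    RelevantLe G (labels ω) 0 v ↔ ω v 0 = true := by
  unfold RelevantLe
  constructor
  · rintro ⟨i, hi, h⟩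
    obtain rfl : i = 0 := by omega
    rw [relevant_iff] at h
    rcases h with h | h
    · exact h.2
    · exact h.1
  · intro h
    exact ⟨0, le_rfl, (relevant_iff _ _ _ _).2 (Or.inl ⟨rfl, h⟩)⟩

theorem relevantLe_succ (G : SimpleGraph V) (ω : V → ℕ → Bool) (n : ℕ) (v : V) :
    RelevantLe G (labels ω) (n + 1) v ↔ RelevantLe G (labels ω) n v ∨
      (ω v (n + 1) = true ∧ ∃! w, G.Adj v w ∧ RelevantLe G (labels ω) n w) := by
  have key : ∀ w, (∃ j, ∃ _ : j < n + 1, Relevant G (labels ω) j w) ↔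
      RelevantLe G (labels ω) n w := by
    intro w
    unfold RelevantLe
    constructor
    · rintro ⟨j, hj, h⟩; exact ⟨j, by omega, h⟩
    · rintro ⟨j, hj, h⟩; exact ⟨j, by omega, h⟩
  constructor
  · rintro ⟨i, hi, h⟩
    rcases Nat.lt_or_ge i (n + 1) with h1 | h1
    · exact Or.inl ⟨i, by omega, h⟩
    · obtain rfl : i = n + 1 := by omega
      rw [relevant_iff] at h
      rcases h with h | ⟨h1, h2, h3⟩
      · omega
      · right
        refine ⟨h1, ?_⟩
        simpa only [key] using h3
  · rintro (⟨i, hi, h⟩ | ⟨h1, h2⟩)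
    · exact ⟨i, by omega, h⟩
    · by_cases hn : RelevantLe G (labels ω) n v
      · obtain ⟨i, hi, h⟩ := hn
        exact ⟨i, by omega, h⟩
      · refine ⟨n + 1, le_rfl, (relevant_iff _ _ _ _).2 (Or.inr ⟨h1, ?_, ?_⟩)⟩
        · intro j hj h
          exact hn ⟨j, by omega, h⟩
        · simpa only [key] using h2

theorem relevantLe_mono {G : SimpleGraph V} {S : V → Set ℕ} {m n : ℕ} (h : m ≤ n) {v : V}
    (hb : RelevantLe G S m v) : RelevantLe G S n v := by
  obtain ⟨i, hi, h'⟩ := hb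
  exact ⟨i, hi.trans h, h'⟩

theorem relevantLe_iff_BR (G : SimpleGraph V) (ω : V → ℕ → Bool) (n : ℕ) :
    ∀ u v, G.Adj u v → ¬ RelevantLe G (labels ω) n u →
      (RelevantLe G (labels ω) n v ↔ BR G ω n u v) := by
  induction n with
  | zero =>
    intro u v _ _
    rw [relevantLe_zero]; rfl
  | succ n ih =>
    intro u v huv hu
    have hu' : ¬ RelevantLe G (labels ω) n u := fun h => hu (relevantLe_mono (by omega) h)
    rw [relevantLe_succ, BR, ← ih u v huv hu']
    by_cases hv : RelevantLe G (labels ω) n v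
    · simp [hv]
    · have : ∀ w, (G.Adj v w ∧ RelevantLe G (labels ω) n w) ↔
          ((G.Adj v w ∧ w ≠ u) ∧ BR G ω n v w) := by
        intro w
        constructor
        · rintro ⟨h1, h2⟩
          refine ⟨⟨h1, ?_⟩, (ih v w h1 hv).1 h2⟩
          rintro rfl
          exact hu' h2
        · rintro ⟨⟨h1, _⟩, h2⟩
          exact ⟨h1, (ih v w h1 hv).2 h2⟩
      simp only [this]

theorem white_iff (G : SimpleGraph V) (ω : V → ℕ → Bool) (n : ℕ) (u : V) :
    u ∈ White G (labels ω) n ↔ ω u 0 = false ∧ ∀ v, G.Adj u v → ¬ BR G ω n u v := by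
  constructor
  · rintro ⟨h1, h2⟩
    constructor
    · by_contra h
      exact h1 (relevantLe_mono (Nat.zero_le n) ((relevantLe_zero G ω u).2 (by simpa using h)))
    · intro v hv hb
      exact h2 v hv ((relevantLe_iff_BR G ω n u v hv h1).2 hb)
  · rintro ⟨h1, h2⟩
    have key : ∀ m ≤ n, ¬ RelevantLe G (labels ω) m u := by
      intro m
      induction m with
      | zero => intro _; rw [relevantLe_zero]; simp [h1]
      | succ m ih =>
        intro hm
        have ih' := ih (by omega)
        rw [relevantLe_succ]
        rintro (h | ⟨_, w, ⟨hw, hr⟩, _⟩)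
        · exact ih' h
        · exact h2 w hw (BR_mono (by omega) ((relevantLe_iff_BR G ω m u w hw ih').1 hr))
    exact ⟨key n le_rfl, fun v hv hr =>
      h2 v hv ((relevantLe_iff_BR G ω n u v hv (key n le_rfl)).1 hr)⟩

/-- Event that all children of `v` (seen from `u`) are not relevant and `v` has no label 0. -/
def EE (G : SimpleGraph V) (ω : V → ℕ → Bool) (n : ℕ) (u v : V) : Prop :=
  ω v 0 = false ∧ ∀ w, (G.Adj v w ∧ w ≠ u) → ¬ BR G ω n v w

theorem EE_not_BR {G : SimpleGraph V} {ω : V → ℕ → Bool} {n : ℕ} {u v : V}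
    (h : EE G ω n u v) : ¬ BR G ω n u v := by
  have : ∀ m ≤ n, ¬ BR G ω m u v := by
    intro m
    induction m with
    | zero => intro _; simp [BR, h.1]
    | succ m ih =>
      intro hm
      rintro (h' | ⟨_, w, ⟨hw, hr⟩, _⟩)
      · exact ih (by omega) h'
      · exact h.2 w hw (BR_mono (by omega) hr)
  exact this n le_rfl

theorem white_nbr_iff {G : SimpleGraph V} {ω : V → ℕ → Bool} {n : ℕ} {u v : V}
    (huv : G.Adj u v) (hu : u ∈ White G (labels ω) n) :
    v ∈ White G (labels ω) n ↔ EE G ω n u v := by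
  have hv : ¬ RelevantLe G (labels ω) n v := hu.2 v huv
  constructor
  · intro h
    have := (white_iff G ω n v).1 h
    exact ⟨this.1, fun w hw => this.2 w hw.1⟩
  · intro h
    refine ⟨hv, fun w hw hr => ?_⟩
    by_cases hwu : w = u
    · subst hwu; exact hu.1 hr
    · exact h.2 w ⟨hw, hwu⟩ ((relevantLe_iff_BR G ω n v w hw hv).1 hr)

/-! ### Girth part -/

theorem path_unique_of_girth {G : SimpleGraph V} {g : ℕ} (hg : (g : ℕ∞) ≤ G.egirth)
    {x y : V} (p q : G.Walk x y) (hp : p.IsPath) (hq : q.IsPath)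
    (h : p.length + q.length < g) : p = q := by
  by_contra hne
  obtain ⟨w, _, _, c, hc, hl⟩ := hp.exists_isCycle_length_le_add_of_ne hq hne
  have h1 : (g : ℕ∞) ≤ c.length := SimpleGraph.le_egirth.1 hg w c hc
  have h2 : g ≤ c.length := by exact_mod_cast h1
  omega

/-- Vertices in the branch at `v` away from `u` within distance `n`. -/
def DD (G : SimpleGraph V) (n : ℕ) (u v : V) : Set V :=
  {x | ∃ p : G.Walk v x, p.IsPath ∧ u ∉ p.support ∧ p.length ≤ n}

theorem DD_mono {G : SimpleGraph V} {m n : ℕ} (h : m ≤ n) {u v : V} :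
    DD G m u v ⊆ DD G n u v := by
  rintro x ⟨p, h1, h2, h3⟩
  exact ⟨p, h1, h2, h3.trans h⟩

theorem self_mem_DD {G : SimpleGraph V} {n : ℕ} {u v : V} (h : G.Adj u v) : v ∈ DD G n u v :=
  ⟨SimpleGraph.Walk.nil, by simp, by simpa using h.ne, by simp⟩

theorem DD_step {G : SimpleGraph V} {g : ℕ} (hg : (g : ℕ∞) ≤ G.egirth) {n : ℕ}
    (hn : n + 2 < g) {u v w : V} (huv : G.Adj u v) (hvw : G.Adj v w) (hwu : w ≠ u) :
    DD G n v w ⊆ DD G (n + 1) u v := by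
  classical
  rintro x ⟨p, h1, h2, h3⟩
  refine ⟨SimpleGraph.Walk.cons hvw p, ?_, ?_, ?_⟩
  · rw [SimpleGraph.Walk.cons_isPath_iff]; exact ⟨h1, h2⟩
  · rw [SimpleGraph.Walk.support_cons, List.mem_cons, not_or]
    refine ⟨huv.ne, fun hu => ?_⟩
    have hl := p.length_takeUntil_le_length hu
    have h5 : v ∉ (p.takeUntil u hu).support :=
      fun h => h2 (p.support_takeUntil_subset_support hu h)
    have := path_unique_of_girth hg (SimpleGraph.Walk.cons hvw (p.takeUntil u hu))
      (SimpleGraph.Walk.cons huv.symm SimpleGraph.Walk.nil)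
      (by rw [SimpleGraph.Walk.cons_isPath_iff]; exact ⟨h1.takeUntil hu, h5⟩)
      (by simp [huv.ne']) (by simp; omega)
    simp at this
    exact hwu this.1
  · simp; omega

theorem DD_disjoint {G : SimpleGraph V} {g : ℕ} (hg : (g : ℕ∞) ≤ G.egirth) {n : ℕ}
    (hn : 2 * n + 2 < g) {u v w : V} (huv : G.Adj u v) (huw : G.Adj u w) (hvw : v ≠ w) :
    Disjoint (DD G n u v) (DD G n u w) := by
  rw [Set.disjoint_left]
  rintro x ⟨p, p1, p2, p3⟩ ⟨q, q1, q2, q3⟩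
  have := path_unique_of_girth hg (SimpleGraph.Walk.cons huv p) (SimpleGraph.Walk.cons huw q)
    (by rw [SimpleGraph.Walk.cons_isPath_iff]; exact ⟨p1, p2⟩)
    (by rw [SimpleGraph.Walk.cons_isPath_iff]; exact ⟨q1, q2⟩) (by simp; omega)
  simp at this
  exact hvw this.1

theorem notMem_DD (G : SimpleGraph V) (n : ℕ) (u v : V) : u ∉ DD G n u v := by
  rintro ⟨p, _, h, _⟩
  exact h p.end_mem_support

/-! ### Measurability and independence -/

/-- The σ-algebra generated by the labels of vertices in `D`. -/
def sig (D : Set V) : MeasurableSpace (V → ℕ → Bool) :=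
  ⨆ q ∈ {q : V × ℕ | q.1 ∈ D},
    MeasurableSpace.generateFrom {{ω : V → ℕ → Bool | ω q.1 q.2 = true}}

theorem sig_mono {D D' : Set V} (h : D ⊆ D') : sig D ≤ sig D' :=
  biSup_mono fun _ hq => h hq

theorem measurableSet_coord (v : V) (i : ℕ) :
    MeasurableSet {ω : V → ℕ → Bool | ω v i = true} := by
  have h : Measurable fun ω : V → ℕ → Bool => ω v i := by fun_prop
  exact h (measurableSet_singleton true)

theorem gen_le (q : V × ℕ) :
    MeasurableSpace.generateFrom {{ω : V → ℕ → Bool | ω q.1 q.2 = true}} ≤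
      (inferInstance : MeasurableSpace (V → ℕ → Bool)) := by
  apply MeasurableSpace.generateFrom_le
  rintro t rfl
  exact measurableSet_coord _ _

theorem sig_le (D : Set V) : sig D ≤ (inferInstance : MeasurableSpace (V → ℕ → Bool)) :=
  iSup₂_le fun q _ => gen_le q

theorem sig_coord {D : Set V} {v : V} (hv : v ∈ D) (i : ℕ) :
    MeasurableSet[sig D] {ω : V → ℕ → Bool | ω v i = true} := by
  have : MeasurableSpace.generateFrom {{ω : V → ℕ → Bool | ω v i = true}} ≤ sig D :=
    le_biSup (fun q : V × ℕ =>
      MeasurableSpace.generateFrom {{ω : V → ℕ → Bool | ω q.1 q.2 = true}})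
      (show (v, i) ∈ {q : V × ℕ | q.1 ∈ D} from hv)
  exact this _ (MeasurableSpace.measurableSet_generateFrom rfl)

theorem sig_indep {μ : Measure (V → ℕ → Bool)} {p₀ p : ℝ} (hμ : IsLabelMeasure μ p₀ p)
    {D D' : Set V} (h : Disjoint D D') {A B : Set (V → ℕ → Bool)}
    (hA : MeasurableSet[sig D] A) (hB : MeasurableSet[sig D'] B) :
    μ (A ∩ B) = μ A * μ B := by
  have h1 := indep_iSup_of_disjoint (gen_le (V := V)) ((iIndepSet_iff_iIndep _ _).1 hμ.2.1)
    (S := {q : V × ℕ | q.1 ∈ D}) (T := {q : V × ℕ | q.1 ∈ D'}) (by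
      rw [Set.disjoint_left] at h ⊢
      intro q hq hq'
      exact h hq hq')
  exact (Indep_iff _ _ _).1 h1 A B hA hB

theorem sig_indep_finset {μ : Measure (V → ℕ → Bool)} {p₀ p : ℝ} (hμ : IsLabelMeasure μ p₀ p)
    {ι : Type*} (s : Finset ι) (D : ι → Set V) (A : ι → Set (V → ℕ → Bool))
    (hD : ∀ i j, i ≠ j → Disjoint (D i) (D j)) (hA : ∀ i, MeasurableSet[sig (D i)] (A i)) :
    μ (⋂ i ∈ s, A i) = ∏ i ∈ s, μ (A i) := by
  classical
  have := hμ.1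
  induction s using Finset.induction_on with
  | empty => simp
  | insert a s ha ih =>
    rw [Finset.set_biInter_insert, Finset.prod_insert ha, ← ih]
    refine sig_indep hμ (D := D a) (D' := ⋃ i ∈ s, D i) ?_ (hA a) ?_
    · rw [Set.disjoint_iUnion₂_right]
      intro i hi
      exact hD a i (by rintro rfl; exact ha hi)
    · refine Finset.measurableSet_biInter (m := sig (⋃ i ∈ s, D i)) s fun i hi => ?_
      exact sig_mono (Set.subset_biUnion_of_mem (u := D) (show i ∈ (s : Set ι) from hi)) _ (hA i)

/-- Root together with its disjoint branches. -/
theorem sig_indep_root {μ : Measure (V → ℕ → Bool)} {p₀ p : ℝ} (hμ : IsLabelMeasure μ p₀ p)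
    {m : ℕ} (v : V) (D : Fin m → Set V) (B : Set (V → ℕ → Bool)) (A : Fin m → Set (V → ℕ → Bool))
    (hD : ∀ i j, i ≠ j → Disjoint (D i) (D j)) (hA : ∀ i, MeasurableSet[sig (D i)] (A i))
    (hv : ∀ i, v ∉ D i) (hB : MeasurableSet[sig {v}] B) :
    μ.real (B ∩ ⋂ i, A i) = μ.real B * ∏ i, μ.real (A i) := by
  have h1 := sig_indep_finset hμ Finset.univ D A hD hA
  have h2 : μ (B ∩ ⋂ i, A i) = μ B * μ (⋂ i, A i) := by
    refine sig_indep hμ (D := {v}) (D' := ⋃ i, D i) ?_ hB ?_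
    · simpa using hv
    · refine MeasurableSet.iInter fun i => ?_
      exact sig_mono (Set.subset_iUnion D i) _ (hA i)
  simp only [Finset.mem_univ, iInter_true] at h1
  simp only [Measure.real]
  rw [h2, h1, ENNReal.toReal_mul, ENNReal.toReal_prod]

theorem measurableSet_exists {Ω ι : Type*} [Finite ι] {m : MeasurableSpace Ω} {P : Ω → ι → Prop}
    (h : ∀ i, MeasurableSet {ω | P ω i}) : MeasurableSet {ω | ∃ i, P ω i} := by
  have : {ω | ∃ i, P ω i} = ⋃ i, {ω | P ω i} := by ext; simp
  rw [this]
  exact MeasurableSet.iUnion h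

theorem measurableSet_forall {Ω ι : Type*} [Finite ι] {m : MeasurableSpace Ω} {P : Ω → ι → Prop}
    (h : ∀ i, MeasurableSet {ω | P ω i}) : MeasurableSet {ω | ∀ i, P ω i} := by
  have : {ω | ∀ i, P ω i} = ⋂ i, {ω | P ω i} := by ext; simp
  rw [this]
  exact MeasurableSet.iInter h

theorem sig_BR [Fintype V] {G : SimpleGraph V} {g : ℕ} (hg : (g : ℕ∞) ≤ G.egirth) (n : ℕ)
    (hn : n + 1 < g) :
    ∀ u v, G.Adj u v → MeasurableSet[sig (DD G n u v)] {ω : V → ℕ → Bool | BR G ω n u v} := by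
  induction n with
  | zero =>
    intro u v huv
    exact sig_coord (self_mem_DD huv) 0
  | succ n ih =>
    intro u v huv
    let _ : MeasurableSpace (V → ℕ → Bool) := sig (DD G (n + 1) u v)
    have h1 : MeasurableSet {ω : V → ℕ → Bool | BR G ω n u v} :=
      sig_mono (DD_mono (Nat.le_succ n)) _ (ih (by omega) u v huv)
    have h2 : MeasurableSet {ω : V → ℕ → Bool | ω v (n + 1) = true} :=
      sig_coord (self_mem_DD huv) _
    have h3 : ∀ w, MeasurableSet {ω : V → ℕ → Bool | (G.Adj v w ∧ w ≠ u) ∧ BR G ω n v w} := by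
      intro w
      by_cases h : G.Adj v w ∧ w ≠ u
      · simp only [h, true_and, ne_eq, not_false_eq_true]
        exact sig_mono (DD_step hg (by omega) huv h.1 h.2) _ (ih (by omega) v w h.1)
      · simp only [h, false_and, ofPred_false]
        exact MeasurableSet.empty
    have h4 : MeasurableSet {ω : V → ℕ → Bool | ∃! w, (G.Adj v w ∧ w ≠ u) ∧ BR G ω n v w} := by
      unfold ExistsUnique
      refine measurableSet_exists fun w => (h3 w).inter ?_
      refine measurableSet_forall fun y => ?_
      exact (h3 y).imp (MeasurableSet.const _)
    exact h1.union (h2.inter h4)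

theorem sig_EE [Fintype V] {G : SimpleGraph V} {g : ℕ} (hg : (g : ℕ∞) ≤ G.egirth) (n : ℕ)
    (hn : n + 2 < g) (u v : V) (huv : G.Adj u v) :
    MeasurableSet[sig (DD G (n + 1) u v)] {ω : V → ℕ → Bool | EE G ω n u v} := by
  let _ : MeasurableSpace (V → ℕ → Bool) := sig (DD G (n + 1) u v)
  have h2 : MeasurableSet {ω : V → ℕ → Bool | ω v 0 = false} := by
    have := (sig_coord (D := DD G (n + 1) u v) (self_mem_DD huv) 0).compl
    convert this using 1
    ext ω; simp
  refine h2.inter ?_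
  refine measurableSet_forall fun w => ?_
  by_cases h : G.Adj v w ∧ w ≠ u
  · simp only [h, ne_eq, not_false_eq_true, and_self, forall_const]
    exact (sig_mono (DD_step hg (by omega) huv h.1 h.2) _ (sig_BR hg n (by omega) v w h.1)).compl
  · simp only [h, false_implies, ofPred_true]
    exact MeasurableSet.univ

/-- Law of the labels of one vertex. -/
theorem law_labels {μ : Measure (V → ℕ → Bool)} {p₀ p : ℝ} (hμ : IsLabelMeasure μ p₀ p)
    (hp₀ : p₀ ∈ Ioo (0 : ℝ) 1) (hp : p ∈ Ioo (0 : ℝ) 1)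
    (v : V) (n : ℕ) (t : Fin n → Bool) :
    μ.real {ω | (fun i : Fin n => ω v i) = t} =
      ∏ i : Fin n, (if t i then (if (i : ℕ) = 0 then p₀ else p)
        else 1 - (if (i : ℕ) = 0 then p₀ else p)) := by
  have := hμ.1
  have h1 := (iIndepSet_iff_iIndep _ _).1 hμ.2.1
  have h2 := h1.precomp (g := fun i : Fin n => (v, (i : ℕ)))
    (by intro i j h; simpa [Fin.ext_iff] using h)
  have h3 := h2.meas_iInter (s := fun i : Fin n => {ω : V → ℕ → Bool | ω v i = t i}) (by
    intro i
    have hm := MeasurableSpace.measurableSet_generateFrom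
      (s := {{ω : V → ℕ → Bool | ω v i = true}}) rfl
    cases hti : t i
    · have he : {ω : V → ℕ → Bool | ω v i = false} = {ω : V → ℕ → Bool | ω v i = true}ᶜ := by
        ext ω; simp
      rw [he]
      exact hm.compl
    · exact hm)
  have h4 : {ω : V → ℕ → Bool | (fun i : Fin n => ω v i) = t} =
      ⋂ i : Fin n, {ω : V → ℕ → Bool | ω v i = t i} := by
    ext ω; simp [funext_iff]
  rw [h4, Measure.real, h3, ENNReal.toReal_prod]
  refine Finset.prod_congr rfl fun i _ => ?_
  have hpi : 0 ≤ (if (i : ℕ) = 0 then p₀ else p) := by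
    split_ifs
    · exact hp₀.1.le
    · exact hp.1.le
  cases hti : t i
  · have : {ω : V → ℕ → Bool | ω v i = false} = {ω : V → ℕ → Bool | ω v i = true}ᶜ := by
      ext ω; simp
    rw [this, ← Measure.real, probReal_compl_eq_one_sub (measurableSet_coord _ _), Measure.real,
      hμ.2.2, ENNReal.toReal_ofReal hpi]
    simp
  · rw [hμ.2.2, ENNReal.toReal_ofReal hpi]
    simp

/-! ### Homogeneity -/

/-- Recursion of the branch process in terms of the children. -/
def Phi {m : ℕ} (s : ℕ → Prop) (c : Fin m → ℕ → Prop) : ℕ → Prop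
  | 0 => s 0
  | n + 1 => Phi s c n ∨ (s (n + 1) ∧ ∃! j, c j n)

theorem Phi_congr {m : ℕ} {s s' : ℕ → Prop} {c c' : Fin m → ℕ → Prop} (n : ℕ)
    (hs : ∀ i ≤ n, s i ↔ s' i) (hc : ∀ j, ∀ i < n, c j i ↔ c' j i) :
    Phi s c n ↔ Phi s' c' n := by
  induction n with
  | zero => exact hs 0 le_rfl
  | succ n ih =>
    have h1 := ih (fun i hi => hs i (by omega)) (fun j i hi => hc j i (by omega))
    have h2 : ∀ j, c j n ↔ c' j n := fun j => hc j n (by omega)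
    simp only [Phi, h1, hs (n + 1) le_rfl, h2]

theorem BR_eq_Phi {G : SimpleGraph V} {m : ℕ} {u v : V} (f : Fin m → V)
    (hf : Function.Injective f) (hr : ∀ w, (G.Adj v w ∧ w ≠ u) ↔ ∃ j, f j = w)
    (ω : V → ℕ → Bool) (n : ℕ) :
    BR G ω n u v ↔ Phi (fun i => ω v i = true) (fun j i => BR G ω i v (f j)) n := by
  induction n with
  | zero => rfl
  | succ n ih =>
    have : (∃! w, (G.Adj v w ∧ w ≠ u) ∧ BR G ω n v w) ↔ ∃! j, BR G ω n v (f j) := by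
      simp only [hr]
      constructor
      · rintro ⟨w, ⟨⟨j, rfl⟩, h⟩, h'⟩
        exact ⟨j, h, fun k hk => hf (h' (f k) ⟨⟨k, rfl⟩, hk⟩)⟩
      · rintro ⟨j, h, h'⟩
        refine ⟨f j, ⟨⟨j, rfl⟩, h⟩, ?_⟩
        rintro w ⟨⟨k, rfl⟩, hk⟩
        rw [h' k hk]
    rw [BR, Phi, ih, this]

theorem exists_children [Fintype V] {G : SimpleGraph V} {r : ℕ} (hreg : IsRegular G r) {u v : V}
    (huv : G.Adj u v) : ∃ f : Fin (r - 1) → V, Function.Injective f ∧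
      ∀ w, (G.Adj v w ∧ w ≠ u) ↔ ∃ j, f j = w := by
  classical
  have h1 : (G.neighborSet v \ {u}).ncard = r - 1 := by
    rw [Set.ncard_sdiff_singleton_of_mem (by simpa using huv.symm), hreg v]
  rw [← Nat.card_coe_set_eq] at h1
  have e := Finite.equivFinOfCardEq h1
  refine ⟨fun j => (e.symm j : V), fun i j h => e.symm.injective (Subtype.ext h), fun w => ?_⟩
  constructor
  · intro hw
    exact ⟨e ⟨w, by simpa using hw⟩, by simp⟩
  · rintro ⟨j, rfl⟩
    exact ⟨(e.symm j).2.1, (e.symm j).2.2⟩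

theorem exists_nbrs [Fintype V] {G : SimpleGraph V} {r : ℕ} (hreg : IsRegular G r) (u : V) :
    ∃ f : Fin r → V, Function.Injective f ∧ ∀ w, G.Adj u w ↔ ∃ j, f j = w := by
  have h1 := hreg u
  rw [← Nat.card_coe_set_eq] at h1
  have e := Finite.equivFinOfCardEq h1
  refine ⟨fun j => (e.symm j : V), fun i j h => e.symm.injective (Subtype.ext h), fun w => ?_⟩
  constructor
  · intro hw
    exact ⟨e ⟨w, by simpa using hw⟩, by simp⟩
  · rintro ⟨j, rfl⟩
    exact (e.symm j).2

theorem measure_of_product {Ω α β : Type*} [MeasurableSpace Ω] {μ : Measure Ω}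
    [IsProbabilityMeasure μ] [Fintype α] [Fintype β] {m : ℕ}
    (X : Ω → α) (Y : Fin m → Ω → β)
    (hX : ∀ s, MeasurableSet {ω | X ω = s}) (hY : ∀ j t, MeasurableSet {ω | Y j ω = t})
    (hind : ∀ (s : α) (t : Fin m → β), μ.real ({ω | X ω = s} ∩ ⋂ j, {ω | Y j ω = t j}) =
      μ.real {ω | X ω = s} * ∏ j, μ.real {ω | Y j ω = t j})
    (A : α × (Fin m → β) → Prop) [DecidablePred A] :
    μ.real {ω | A (X ω, fun j => Y j ω)} =
      ∑ z : α × (Fin m → β) with A z, μ.real {ω | X ω = z.1} * ∏ j, μ.real {ω | Y j ω = z.2 j} := by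
  have h1 : {ω | A (X ω, fun j => Y j ω)} = ⋃ z ∈ Finset.univ.filter A,
      ({ω | X ω = z.1} ∩ ⋂ j, {ω | Y j ω = z.2 j}) := by
    ext ω
    simp only [Finset.mem_filter, Finset.mem_univ, true_and, mem_iUnion, mem_inter_iff,
      mem_iInter, Set.mem_ofPred_eq, exists_prop]
    constructor
    · intro h
      exact ⟨_, h, rfl, fun j => rfl⟩
    · rintro ⟨⟨s, t⟩, h, h1, h2⟩
      have : (fun j => Y j ω) = t := funext h2
      rw [this, h1]
      exact h
  rw [h1, measureReal_biUnion_finset]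
  · exact Finset.sum_congr rfl fun z _ => hind z.1 z.2
  · intro z _ z' _ hne
    rw [Function.onFun, Set.disjoint_left]
    rintro ω ⟨h1, h2⟩ ⟨h3, h4⟩
    simp only [mem_iInter, Set.mem_ofPred_eq] at h1 h2 h3 h4
    apply hne
    ext1
    · rw [← h1, ← h3]
    · funext j
      rw [← h2, ← h4]
  · intro z _
    exact (hX _).inter (MeasurableSet.iInter fun j => hY j _)

open Classical in
/-- The law of the branch process up to time `n` does not depend on the directed edge. -/
theorem law_branch [Fintype V] {r g : ℕ} {G : SimpleGraph V}
    (hreg : IsRegular G r) (hg : (g : ℕ∞) ≤ G.egirth)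
    {p₀ p : ℝ} (hp₀ : p₀ ∈ Ioo (0 : ℝ) 1) (hp : p ∈ Ioo (0 : ℝ) 1)
    {μ : Measure (V → ℕ → Bool)} (hμ : IsLabelMeasure μ p₀ p) (n : ℕ) (hn : 2 * n + 2 < g) :
    ∀ u v u' v', G.Adj u v → G.Adj u' v' → ∀ t : Fin (n + 1) → Bool,
      μ.real {ω | (fun i : Fin (n + 1) => decide (BR G ω i u v)) = t} =
      μ.real {ω | (fun i : Fin (n + 1) => decide (BR G ω i u' v')) = t} := by
  have := hμ.1
  induction n with
  | zero =>
    intro u v u' v' _ _ t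
    have key : ∀ u v, {ω | (fun i : Fin (0 + 1) => decide (BR G ω i u v)) = t} =
        {ω | (fun i : Fin (0 + 1) => ω v i) = t} := by
      intro u v
      ext ω
      simp [funext_iff, BR]
    rw [key, key, law_labels hμ hp₀ hp, law_labels hμ hp₀ hp]
  | succ n ih =>
    intro u v u' v' huv huv' t
    have ih' := ih (by omega)
    let A : (Fin (n + 2) → Bool) × (Fin (r - 1) → Fin (n + 1) → Bool) → Prop := fun z =>
      (fun i : Fin (n + 2) => decide (Phi (fun k => ∃ h : k < n + 2, z.1 ⟨k, h⟩ = true)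
        (fun j k => ∃ h : k < n + 1, z.2 j ⟨k, h⟩ = true) i)) = t
    have key : ∀ u v, G.Adj u v → ∃ f : Fin (r - 1) → V, (∀ j, G.Adj v (f j)) ∧
        μ.real {ω | (fun i : Fin (n + 1 + 1) => decide (BR G ω i u v)) = t} =
        ∑ z : (Fin (n + 2) → Bool) × (Fin (r - 1) → Fin (n + 1) → Bool) with A z,
          μ.real {ω | (fun i : Fin (n + 2) => ω v i) = z.1} *
          ∏ j, μ.real {ω | (fun i : Fin (n + 1) => decide (BR G ω i v (f j))) = z.2 j} := by
      intro u v huv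
      obtain ⟨f, hf, hr⟩ := exists_children hreg huv
      have hfa : ∀ j, G.Adj v (f j) := fun j => ((hr _).2 ⟨j, rfl⟩).1
      refine ⟨f, hfa, ?_⟩
      have hX : ∀ s, MeasurableSet[sig {v}]
          {ω : V → ℕ → Bool | (fun i : Fin (n + 2) => ω v i) = s} := by
        intro s
        simp only [funext_iff]
        refine measurableSet_forall fun i => ?_
        have hc := sig_coord (D := {v}) (Set.mem_singleton v) (i : ℕ)
        cases hs : s i
        · have he : {ω : V → ℕ → Bool | ω v i = false} = {ω : V → ℕ → Bool | ω v i = true}ᶜ := by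
            ext ω; simp
          rw [he]
          exact hc.compl
        · exact hc
      have hY : ∀ j s, MeasurableSet[sig (DD G n v (f j))]
          {ω : V → ℕ → Bool | (fun i : Fin (n + 1) => decide (BR G ω i v (f j))) = s} := by
        intro j s
        simp only [funext_iff]
        refine measurableSet_forall fun i => ?_
        have hc := sig_mono (DD_mono (Nat.lt_succ_iff.1 i.2)) _
          (sig_BR hg i (by have := i.2; omega) v (f j) (hfa j))
        cases hs : s i
        · simp only [decide_eq_false_iff_not]
          exact hc.compl
        · simp only [decide_eq_true_eq]
          exact hc
      rw [← measure_of_product (μ := μ) (fun ω : V → ℕ → Bool => fun i : Fin (n + 2) => ω v i)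
        (fun j ω => fun i : Fin (n + 1) => decide (BR G ω i v (f j)))
        (fun s => sig_le _ _ (hX s)) (fun j s => sig_le _ _ (hY j s)) ?_ A]
      · congr 1
        ext ω
        simp only [Set.mem_ofPred_eq, A]
        have : ∀ i : Fin (n + 2), (BR G ω i u v ↔
            Phi (fun k => ∃ h : k < n + 2, ω v k = true)
              (fun j k => ∃ h : k < n + 1, decide (BR G ω k v (f j)) = true) i) := by
          intro i
          rw [BR_eq_Phi f hf hr]
          have := i.2
          refine Phi_congr _ (fun k hk => ?_) (fun j k hk => ?_)
          · have : k < n + 2 := by omega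
            simp [this]
          · have : k < n + 1 := by omega
            simp [this]
        simp only [this]
      · intro s s'
        refine sig_indep_root hμ v (fun j => DD G n v (f j)) _ _ ?_ (fun j => hY j _) ?_ (hX s)
        · intro i j hij
          exact DD_disjoint hg (by omega) (hfa i) (hfa j) (fun h => hij (hf h))
        · intro i
          exact notMem_DD _ _ _ _
    obtain ⟨f, hf, h1⟩ := key u v huv
    obtain ⟨f', hf', h2⟩ := key u' v' huv'
    rw [h1, h2]
    refine Finset.sum_congr rfl fun z _ => ?_
    rw [law_labels hμ hp₀ hp, law_labels hμ hp₀ hp]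
    congr 1
    exact Finset.prod_congr rfl fun j _ => ih' _ _ _ _ (hf j) (hf' j) _

theorem law_BR [Fintype V] {r g : ℕ} {G : SimpleGraph V}
    (hreg : IsRegular G r) (hg : (g : ℕ∞) ≤ G.egirth)
    {p₀ p : ℝ} (hp₀ : p₀ ∈ Ioo (0 : ℝ) 1) (hp : p ∈ Ioo (0 : ℝ) 1)
    {μ : Measure (V → ℕ → Bool)} (hμ : IsLabelMeasure μ p₀ p) (n : ℕ) (hn : 2 * n + 2 < g)
    {u v u' v' : V} (huv : G.Adj u v) (huv' : G.Adj u' v') :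
    μ.real {ω | ¬ BR G ω n u v} = μ.real {ω | ¬ BR G ω n u' v'} := by
  classical
  have h := law_branch hreg hg hp₀ hp hμ n hn u v u' v' huv huv' (fun _ => false)
  have key : ∀ u v, {ω | (fun i : Fin (n + 1) => decide (BR G ω i u v)) = fun _ => false} =
      {ω | ¬ BR G ω n u v} := by
    intro u v
    ext ω
    simp only [funext_iff, decide_eq_false_iff_not, Set.mem_ofPred_eq]
    constructor
    · intro h
      exact h ⟨n, by omega⟩
    · intro h i hi
      exact h (BR_mono (by omega) hi)
  rwa [key, key] at h

theorem label_zero {μ : Measure (V → ℕ → Bool)} {p₀ p : ℝ} (hμ : IsLabelMeasure μ p₀ p)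
    (hp₀ : p₀ ∈ Ioo (0 : ℝ) 1) (v : V) : μ.real {ω | ω v 0 = false} = 1 - p₀ := by
  have := hμ.1
  have he : {ω : V → ℕ → Bool | ω v 0 = false} = {ω : V → ℕ → Bool | ω v 0 = true}ᶜ := by
    ext ω; simp
  rw [he, probReal_compl_eq_one_sub (measurableSet_coord _ _), Measure.real, hμ.2.2,
    ENNReal.toReal_ofReal (by simpa using hp₀.1.le)]
  simp

theorem sig_label_zero (v : V) : MeasurableSet[sig {v}] {ω : V → ℕ → Bool | ω v 0 = false} := by
  have he : {ω : V → ℕ → Bool | ω v 0 = false} = {ω : V → ℕ → Bool | ω v 0 = true}ᶜ := by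
    ext ω; simp
  rw [he]
  exact (sig_coord (D := {v}) (Set.mem_singleton v) 0).compl

theorem law_EE [Fintype V] {r g : ℕ} {G : SimpleGraph V}
    (hreg : IsRegular G r) (hg : (g : ℕ∞) ≤ G.egirth)
    {p₀ p : ℝ} (hp₀ : p₀ ∈ Ioo (0 : ℝ) 1) (hp : p ∈ Ioo (0 : ℝ) 1)
    {μ : Measure (V → ℕ → Bool)} (hμ : IsLabelMeasure μ p₀ p) (n : ℕ) (hn : 2 * n + 2 < g)
    {u v u' v' : V} (huv : G.Adj u v) (huv' : G.Adj u' v') :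
    μ.real {ω | EE G ω n u v} = μ.real {ω | EE G ω n u' v'} := by
  have key : ∀ x y, G.Adj x y → μ.real {ω | EE G ω n x y} =
      (1 - p₀) * ∏ _j : Fin (r - 1), μ.real {ω | ¬ BR G ω n u v} := by
    intro x y hxy
    obtain ⟨f, hf, hr⟩ := exists_children hreg hxy
    have hfa : ∀ j, G.Adj y (f j) := fun j => ((hr _).2 ⟨j, rfl⟩).1
    have h1 : {ω | EE G ω n x y} = {ω | ω y 0 = false} ∩ ⋂ j, {ω | ¬ BR G ω n y (f j)} := by
      ext ω
      simp [EE, hr]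
    rw [h1, sig_indep_root hμ y (fun j => DD G n y (f j)), label_zero hμ hp₀]
    · congr 1
      exact Finset.prod_congr rfl fun j _ => law_BR hreg hg hp₀ hp hμ n hn (hfa j) huv
    · intro i j hij
      exact DD_disjoint hg (by omega) (hfa i) (hfa j) (fun h => hij (hf h))
    · intro j
      exact (sig_BR hg n (by omega) _ _ (hfa j)).compl
    · intro j
      exact notMem_DD _ _ _ _
    · exact sig_label_zero y
  rw [key u v huv, key u' v' huv']

theorem BR_pos [Fintype V] {G : SimpleGraph V}
    {p₀ p : ℝ} (hp₀ : p₀ ∈ Ioo (0 : ℝ) 1) (hp : p ∈ Ioo (0 : ℝ) 1)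
    {μ : Measure (V → ℕ → Bool)} (hμ : IsLabelMeasure μ p₀ p) (n : ℕ) (u v : V) :
    0 < μ.real {ω | ¬ BR G ω n u v} := by
  have := hμ.1
  refine lt_of_lt_of_le ?_ (measureReal_mono
    (s₁ := {ω : V → ℕ → Bool | (fun i : Fin (n + 1) => ω v i) = fun _ => false}) ?_)
  · rw [law_labels hμ hp₀ hp]
    refine Finset.prod_pos fun i _ => ?_
    have h1 := hp₀.2
    have h2 := hp.2
    simp only [Bool.false_eq_true, if_false]
    split_ifs <;> linarith
  · intro ω hω
    simp only [Set.mem_ofPred_eq, funext_iff] at hω ⊢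
    have : ∀ m ≤ n, ¬ BR G ω m u v := by
      intro m
      induction m with
      | zero => intro h; simpa [BR] using hω ⟨0, by omega⟩
      | succ m ih =>
        intro h
        have h1 := hω ⟨m + 1, by omega⟩
        simp only at h1
        simp [BR, ih (by omega), h1]
    exact this n le_rfl

theorem WEv_eq {G : SimpleGraph V} {r N : ℕ} {u : V} {v : Fin r → V}
    (hr : ∀ w, G.Adj u w ↔ ∃ j, v j = w) :
    WEv G N u = {ω | ω u 0 = false} ∩ ⋂ j, {ω | ¬ BR G ω N u (v j)} := by
  ext ω
  have := white_iff G ω N u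
  simp only [hr, forall_exists_index, forall_apply_eq_imp_iff] at this
  simpa [WEv] using this

theorem indep_star {G : SimpleGraph V} {g : ℕ} (hg : (g : ℕ∞) ≤ G.egirth)
    {μ : Measure (V → ℕ → Bool)} {p₀ p : ℝ} (hμ : IsLabelMeasure μ p₀ p)
    (hp₀ : p₀ ∈ Ioo (0 : ℝ) 1) (n : ℕ) (hn : 2 * n + 2 < g) {r : ℕ}
    (u : V) (v : Fin r → V) (hv : Function.Injective v) (hadj : ∀ j, G.Adj u (v j))
    (F : Fin r → Set (V → ℕ → Bool)) (hF : ∀ j, MeasurableSet[sig (DD G n u (v j))] (F j)) :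
    μ.real ({ω | ω u 0 = false} ∩ ⋂ j, F j) = (1 - p₀) * ∏ j, μ.real (F j) := by
  rw [sig_indep_root hμ u (fun j => DD G n u (v j)) _ F _ hF
    (fun j => notMem_DD _ _ _ _) (sig_label_zero u), label_zero hμ hp₀]
  intro i j hij
  exact DD_disjoint hg hn (hadj i) (hadj j) (fun h => hij (hv h))

/-- Conditional on `u` being white at time `N`, the number of white
neighbours of `u` at time `N` is binomially distributed `Bin(r, q_N / w_N)`, where `q_N`
and `w_N` are computed from any vertex `a` and neighbour `c`. -/
theorem white_neighbours_binomial
    [Fintype V] (r g : ℕ) (G : SimpleGraph V)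
    (hreg : IsRegular G r) (hg : (g : ℕ∞) ≤ G.egirth)
    (p₀ p : ℝ) (hp₀ : p₀ ∈ Ioo (0 : ℝ) 1) (hp : p ∈ Ioo (0 : ℝ) 1)
    (μ : Measure (V → ℕ → Bool)) (hμ : IsLabelMeasure μ p₀ p)
    (N : ℕ) (hN : 2 * (N + 2) < g - 2)
    (u : V) (v : Fin r → V) (hadj : ∀ j, G.Adj u (v j)) (hinj : Function.Injective v)
    (a c : V) (hac : G.Adj a c)
    (k : ℕ) (hk : k ≤ r) :
    μ[|WEv G N u] {ω | {j : Fin r | v j ∈ White G (labels ω) N}.ncard = k}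
      = ENNReal.ofReal ((r.choose k : ℝ)
          * ((μ (WEv G N a ∩ WEv G N c)).toReal / (μ (WEv G N a)).toReal) ^ k
          * (1 - (μ (WEv G N a ∩ WEv G N c)).toReal / (μ (WEv G N a)).toReal) ^ (r - k)) := by
  classical
  have := hμ.1
  have hg2 : 2 * (N + 1) + 2 < g := by omega
  have hr : ∀ w, G.Adj u w ↔ ∃ j, v j = w := by
    have h1 : Set.range v = G.neighborSet u := by
      refine Set.eq_of_subset_of_ncard_le ?_ ?_ (Set.toFinite _)
      · rintro _ ⟨j, rfl⟩
        exact hadj j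
      · rw [hreg u, ← Set.image_univ, Set.ncard_image_of_injective _ hinj]
        simp
    intro w
    rw [← SimpleGraph.mem_neighborSet, ← h1]
    rfl
  have hr0 : 0 < r := by
    rw [← hreg a, Set.ncard_pos (Set.toFinite _)]
    exact ⟨c, hac⟩
  set α := μ.real {ω | ¬ BR G ω N a c} with hα
  set β := μ.real {ω | EE G ω N a c} with hβ
  have hαpos : 0 < α := BR_pos hp₀ hp hμ N a c
  have hp1 : 0 < 1 - p₀ := by linarith [hp₀.2]
  have hA : ∀ x y, G.Adj x y → μ.real {ω | ¬ BR G ω N x y} = α := fun x y h =>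
    law_BR hreg hg hp₀ hp hμ N (by omega) h hac
  have hE : ∀ x y, G.Adj x y → μ.real {ω | EE G ω N x y} = β := fun x y h =>
    law_EE hreg hg hp₀ hp hμ N (by omega) h hac
  have mA : ∀ x y, G.Adj x y → MeasurableSet[sig (DD G (N + 1) x y)]
      {ω : V → ℕ → Bool | ¬ BR G ω N x y} := fun x y h =>
    sig_mono (DD_mono (by omega)) _ (sig_BR hg N (by omega) x y h).compl
  have mE : ∀ x y, G.Adj x y → MeasurableSet[sig (DD G (N + 1) x y)]
      {ω : V → ℕ → Bool | EE G ω N x y} := fun x y h => sig_EE hg N (by omega) x y h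
  have mW : MeasurableSet (WEv G N u) := by
    rw [WEv_eq hr]
    exact (sig_le _ _ (sig_label_zero u)).inter
      (MeasurableSet.iInter fun j => sig_le _ _ (mA u (v j) (hadj j)))
  have hW : ∀ x, μ.real (WEv G N x) = (1 - p₀) * α ^ r := by
    intro x
    obtain ⟨f, hf, hfr⟩ := exists_nbrs hreg x
    have hfa : ∀ j, G.Adj x (f j) := fun j => (hfr _).2 ⟨j, rfl⟩
    rw [WEv_eq hfr, indep_star hg hμ hp₀ (N + 1) hg2 x f hf hfa _ (fun j => mA _ _ (hfa j)),
      Finset.prod_congr rfl (fun j _ => hA _ _ (hfa j))]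
    simp
  have hQ : μ.real (WEv G N a ∩ WEv G N c) = (1 - p₀) * (β * α ^ (r - 1)) := by
    obtain ⟨f, hf, hfr⟩ := exists_nbrs hreg a
    have hfa : ∀ j, G.Adj a (f j) := fun j => (hfr _).2 ⟨j, rfl⟩
    obtain ⟨j₀, hj₀⟩ := (hfr c).1 hac
    have h1 : WEv G N a ∩ WEv G N c = {ω | ω a 0 = false} ∩
        ⋂ j, (if j = j₀ then {ω : V → ℕ → Bool | EE G ω N a (f j)}
          else {ω | ¬ BR G ω N a (f j)}) := by
      ext ω
      constructor
      · rintro ⟨h1, h2⟩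
        have h3 := (white_nbr_iff hac h1).1 h2
        rw [WEv_eq hfr] at h1
        refine ⟨h1.1, Set.mem_iInter.2 fun j => ?_⟩
        split_ifs with hj
        · subst hj
          subst hj₀
          exact h3
        · exact Set.mem_iInter.1 h1.2 j
      · rintro ⟨h1, h2⟩
        rw [Set.mem_iInter] at h2
        have h3 : EE G ω N a c := by
          have := h2 j₀
          rw [if_pos rfl, hj₀] at this
          exact this
        have h4 : ω ∈ WEv G N a := by
          rw [WEv_eq hfr]
          refine ⟨h1, Set.mem_iInter.2 fun j => ?_⟩
          have h5 := h2 j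
          split_ifs at h5 with hj
          · exact EE_not_BR h5
          · exact h5
        exact ⟨h4, (white_nbr_iff hac h4).2 h3⟩
    rw [h1, indep_star hg hμ hp₀ (N + 1) hg2 a f hf hfa]
    · congr 1
      have h2 : ∀ j ∈ Finset.univ.erase j₀, μ.real (if j = j₀ then
          {ω : V → ℕ → Bool | EE G ω N a (f j)} else {ω | ¬ BR G ω N a (f j)}) = α := by
        intro j hj
        rw [if_neg (Finset.ne_of_mem_erase hj)]
        exact hA _ _ (hfa j)
      rw [← Finset.mul_prod_erase _ _ (Finset.mem_univ j₀), Finset.prod_congr rfl h2, if_pos rfl,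
        hE _ _ (hfa j₀)]
      simp
    · intro j
      split_ifs
      · exact mE _ _ (hfa j)
      · exact mA _ _ (hfa j)
  have hC : μ.real (WEv G N u ∩ {ω | {j : Fin r | v j ∈ White G (labels ω) N}.ncard = k}) =
      r.choose k * ((1 - p₀) * (β ^ k * (α - β) ^ (r - k))) := by
    let F : Finset (Fin r) → Fin r → Set (V → ℕ → Bool) := fun T j =>
      if j ∈ T then {ω : V → ℕ → Bool | EE G ω N u (v j)}
      else {ω | ¬ BR G ω N u (v j)} \ {ω | EE G ω N u (v j)}
    have mF : ∀ T j, MeasurableSet[sig (DD G (N + 1) u (v j))] (F T j) := by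
      intro T j
      simp only [F]
      split_ifs
      · exact mE _ _ (hadj j)
      · exact (mA _ _ (hadj j)).diff (mE _ _ (hadj j))
    have hFE : ∀ T j ω, ω ∈ F T j → (EE G ω N u (v j) ↔ j ∈ T) := by
      intro T j ω h
      simp only [F] at h
      split_ifs at h with hj
      · exact iff_of_true h hj
      · exact iff_of_false h.2 hj
    have hFA : ∀ T j ω, ω ∈ F T j → ¬ BR G ω N u (v j) := by
      intro T j ω h
      simp only [F] at h
      split_ifs at h with hj
      · exact EE_not_BR h
      · exact h.1
    have h1 : WEv G N u ∩ {ω | {j : Fin r | v j ∈ White G (labels ω) N}.ncard = k} =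
        ⋃ T ∈ Finset.powersetCard k (Finset.univ : Finset (Fin r)),
          ({ω | ω u 0 = false} ∩ ⋂ j, F T j) := by
      ext ω
      simp only [Set.mem_iUnion, Finset.mem_powersetCard, Finset.subset_univ, true_and, exists_prop]
      constructor
      · rintro ⟨h1, h2⟩
        have h3 : {j : Fin r | v j ∈ White G (labels ω) N} = {j | EE G ω N u (v j)} := by
          ext j
          exact white_nbr_iff (hadj j) h1
        have h2 : {j : Fin r | v j ∈ White G (labels ω) N}.ncard = k := h2
        rw [h3, Set.ncard_eq_toFinset_card'] at h2
        refine ⟨_, h2, ?_⟩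
        rw [WEv_eq hr] at h1
        refine ⟨h1.1, Set.mem_iInter.2 fun j => ?_⟩
        simp only [F, Set.mem_toFinset]
        split_ifs with hj
        · exact hj
        · exact ⟨Set.mem_iInter.1 h1.2 j, hj⟩
      · rintro ⟨T, hT, h1, h2⟩
        rw [Set.mem_iInter] at h2
        have h4 : ω ∈ WEv G N u := by
          rw [WEv_eq hr]
          exact ⟨h1, Set.mem_iInter.2 fun j => hFA T j ω (h2 j)⟩
        refine ⟨h4, ?_⟩
        have h3 : {j : Fin r | v j ∈ White G (labels ω) N} = (T : Set (Fin r)) := by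
          ext j
          exact (white_nbr_iff (hadj j) h4).trans (hFE T j ω (h2 j))
        show {j : Fin r | v j ∈ White G (labels ω) N}.ncard = k
        rw [h3, Set.ncard_coe_finset, hT]
    have hdiff : ∀ j, μ.real ({ω | ¬ BR G ω N u (v j)} \ {ω | EE G ω N u (v j)}) = α - β := by
      intro j
      have hsub : {ω : V → ℕ → Bool | EE G ω N u (v j)} ⊆ {ω | ¬ BR G ω N u (v j)} :=
        fun ω h => EE_not_BR h
      rw [measureReal_sdiff hsub (sig_le _ _ (mE _ _ (hadj j))),
        hA _ _ (hadj j), hE _ _ (hadj j)]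
    rw [h1, measureReal_biUnion_finset]
    · have h2 : ∀ T ∈ Finset.powersetCard k (Finset.univ : Finset (Fin r)),
          μ.real ({ω | ω u 0 = false} ∩ ⋂ j, F T j) =
            (1 - p₀) * (β ^ k * (α - β) ^ (r - k)) := by
        intro T hT
        rw [Finset.mem_powersetCard] at hT
        rw [indep_star hg hμ hp₀ (N + 1) hg2 u v hinj hadj _ (mF T)]
        congr 1
        have h3 : ∀ j, μ.real (F T j) = if j ∈ T then β else α - β := by
          intro j
          simp only [F]
          split_ifs
          · exact hE _ _ (hadj j)
          · exact hdiff j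
        simp only [h3]
        rw [Finset.prod_ite]
        have h4 : (Finset.univ.filter fun j => j ∈ T) = T := by ext; simp
        have h5 : (Finset.univ.filter fun j => j ∉ T) = Tᶜ := by ext; simp
        rw [h4, h5, Finset.prod_const, Finset.prod_const, Finset.card_compl, hT.2]
        simp
      rw [Finset.sum_congr rfl h2, Finset.sum_const, Finset.card_powersetCard]
      simp
    · intro T _ T' _ hne
      rw [Function.onFun, Set.disjoint_left]
      rintro ω ⟨_, h1⟩ ⟨_, h2⟩
      rw [Set.mem_iInter] at h1 h2
      apply hne
      ext j
      rw [← hFE T j ω (h1 j), ← hFE T' j ω (h2 j)]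
    · intro T _
      exact (sig_le _ _ (sig_label_zero u)).inter
        (MeasurableSet.iInter fun j => sig_le _ _ (mF T j))
  rw [← ENNReal.ofReal_toReal (measure_ne_top _ _)]
  congr 1
  rw [cond_apply mW, ENNReal.toReal_mul, ENNReal.toReal_inv]
  change (μ.real (WEv G N u))⁻¹ * μ.real _ =
    _ * (μ.real (WEv G N a ∩ WEv G N c) / μ.real (WEv G N a)) ^ k *
      (1 - μ.real (WEv G N a ∩ WEv G N c) / μ.real (WEv G N a)) ^ (r - k)
  rw [hC, hW, hW, hQ]
  obtain ⟨s, rfl⟩ : ∃ s, r = s + 1 := ⟨r - 1, by omega⟩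
  have h1 : (1 - p₀) * (β * α ^ (s + 1 - 1)) / ((1 - p₀) * α ^ (s + 1)) = β / α := by
    simp only [Nat.add_sub_cancel]
    field_simp
    ring
  have h2 : 1 - β / α = (α - β) / α := by field_simp
  rw [h1, h2, div_pow, div_pow]
  have h3 : α ^ (s + 1) = α ^ k * α ^ (s + 1 - k) := by
    rw [← pow_add]
    congr 1
    omega
  rw [h3]
  field_simp

end InducedForest
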